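/- Assume φ0 and φ1 are continuous. Let J ⊆ (0,1) be an open interval and let h1, …, hn : J → ℝ be differentiable functions with h1(a) < h2(a) < … < hn(a) for all a ∈ J, satisfying the level-set condition a·p0·φ0(hi(a)) = (1−a)·p1·φ1(hi(a)) for every a ∈ J and every i ∈ {1,…,n}. Define f(a) = ∫_{H(h(a))} φ0 and g(a) = ∫_{ℝ∖H(h(a))} φ1, where H(h(a)) is the union of the odd-indexed pieces of the partition of ℝ induced by the thresholds h1(a) < … < hn(a) (i.e. (−∞,h1(a)) ∪ [h2(a),h3(a)) ∪ …). Then f and g are differentiable on J and their derivatives satisfy a·p0·f'(a) + (1−a)·p1·g'(a) = 0 for all a ∈ J; equivalently g'(a) = −(a·p0/((1−a)·p1))·f'(a). -/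

import Mathlib

/-!
For increasing thresholds the indicator of `oddUnion t` is the alternating sum
`1 - ∑ i, (-1)^i · 1_{[t i, ∞)}`. Hence `∫_{H(h(a))} φ` is `∫ φ` minus an alternating sum of
tail integrals `∫_{[h i a, ∞)} φ`, and by the fundamental theorem of calculus and the chain rule its
derivative is `∑ i, (-1)^i φ(h i a) h_i'(a)` (`hasDerivAt_setIntegral_oddUnion`). The integral over
the complement differs by sign and a constant, so the derivative of `g` is the negative of the same
sum with `φ1` in place of `φ0`. The level-set condition makes the two weighted sums cancel term by
term.
-/

open MeasureTheory Real Set Filter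

/-- The union of the odd-indexed pieces of the partition of ℝ induced by the
thresholds `h 0 < h 1 < ⋯ < h (n-1)`, i.e. `(-∞, h 0) ∪ [h 1, h 2) ∪ ⋯`:
a point `y` belongs to it iff the number of thresholds `≤ y` is even. -/
def oddUnion {n : ℕ} (h : Fin n → ℝ) : Set ℝ :=
  {y | Even (Finset.univ.filter (fun i => h i ≤ y)).card}

theorem measurableSet_oddUnion {n : ℕ} (t : Fin n → ℝ) : MeasurableSet (oddUnion t) := by
  have hm : Measurable (fun y : ℝ => (Finset.univ.filter (fun i => t i ≤ y)).card) := by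
    simp only [Finset.card_filter]
    exact Finset.measurable_sum _ fun i _ =>
      Measurable.ite measurableSet_Ici measurable_const measurable_const
  exact hm (MeasurableSet.of_discrete (s := {k : ℕ | Even k}))

/-- The alternating-sum formula for the indicator of `oddUnion t`, multiplied by `φ`. -/
theorem indicator_oddUnion {n : ℕ} (t : Fin n → ℝ) (ht : StrictMono t) (φ : ℝ → ℝ) (y : ℝ) :
    (oddUnion t).indicator φ y =
      φ y - ∑ i : Fin n, (-1 : ℝ) ^ (i : ℕ) * (Ici (t i)).indicator φ y := by
  induction n with
  | zero => simp [oddUnion, Set.indicator]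
  | succ n ih =>
    by_cases hy : t (Fin.last n) ≤ y
    · -- every threshold is `≤ y`, so the count is `n + 1`
      have hall : ∀ i, t i ≤ y := fun i => (ht.monotone (Fin.le_last i)).trans hy
      have hmem : y ∈ oddUnion t ↔ Even (n + 1) := by simp [oddUnion, hall]
      have hsum : ∑ i : Fin (n + 1), (-1 : ℝ) ^ (i : ℕ) * (Ici (t i)).indicator φ y
          = (if Even (n + 1) then 0 else 1) * φ y := by
        rw [← Fin.sum_neg_one_pow, Finset.sum_mul]
        exact Finset.sum_congr rfl fun i _ => by
          rw [Set.indicator_of_mem (Set.mem_Ici.2 (hall i))]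
      rw [hsum]
      by_cases he : Even (n + 1)
      · rw [Set.indicator_of_mem (hmem.2 he), if_pos he]; ring
      · rw [Set.indicator_of_notMem (fun h => he (hmem.1 h)), if_neg he]; ring
    · -- the last threshold exceeds `y` and can be dropped
      have hmem : y ∈ oddUnion t ↔ y ∈ oddUnion (fun i : Fin n => t i.castSucc) := by
        simp only [oddUnion, Set.mem_ofPred_eq, Finset.card_filter, Fin.sum_univ_castSucc,
          if_neg hy, add_zero]
      have hind : (oddUnion t).indicator φ y
          = (oddUnion (fun i : Fin n => t i.castSucc)).indicator φ y := by
        classical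
        simp only [Set.indicator_apply, hmem]
      rw [hind, ih (fun i => t i.castSucc) (ht.comp Fin.strictMono_castSucc),
        Fin.sum_univ_castSucc, Set.indicator_of_notMem (s := Ici (t (Fin.last n))) hy]
      simp

theorem setIntegral_oddUnion {n : ℕ} (t : Fin n → ℝ) (ht : StrictMono t) (φ : ℝ → ℝ)
    (hφ : Integrable φ) :
    ∫ y in oddUnion t, φ y =
      (∫ y, φ y) - ∑ i : Fin n, (-1 : ℝ) ^ (i : ℕ) * ∫ y in Ici (t i), φ y := by
  have hint : ∀ i ∈ (Finset.univ : Finset (Fin n)),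
      Integrable (fun y => (-1 : ℝ) ^ (i : ℕ) * (Ici (t i)).indicator φ y) :=
    fun i _ => (hφ.indicator measurableSet_Ici).const_mul _
  rw [← integral_indicator (measurableSet_oddUnion t),
    integral_congr_ae (Eventually.of_forall (indicator_oddUnion t ht φ)),
    integral_sub hφ (integrable_finsetSum _ hint), integral_finsetSum _ hint]
  simp only [integral_const_mul, integral_indicator measurableSet_Ici]

theorem hasDerivAt_integral_Ici (φ : ℝ → ℝ) (hφ : Integrable φ) (hc : Continuous φ) (x : ℝ) :
    HasDerivAt (fun x => ∫ y in Ici x, φ y) (-φ x) x := by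
  have heq : (fun x => ∫ y in Ici x, φ y)
      = fun x => (∫ y in Ioi (0 : ℝ), φ y) - ∫ y in (0 : ℝ)..x, φ y := by
    funext x
    have h1 := intervalIntegral.integral_interval_add_Ioi (a := 0) (b := x) (μ := volume)
      hφ.integrableOn hφ.integrableOn
    rw [integral_Ici_eq_integral_Ioi, ← h1]
    ring
  rw [heq]
  exact (intervalIntegral.integral_hasDerivAt_right (hc.intervalIntegrable _ _)
    hc.aestronglyMeasurable.stronglyMeasurableAtFilter hc.continuousAt).const_sub _

theorem hasDerivAt_setIntegral_oddUnion (φ : ℝ → ℝ) (hφ : Integrable φ) (hc : Continuous φ)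
    {J : Set ℝ} (hJ : IsOpen J) {n : ℕ} (h : Fin n → ℝ → ℝ)
    (hdiff : ∀ i, ∀ a ∈ J, DifferentiableAt ℝ (h i) a)
    (horder : ∀ a ∈ J, StrictMono (fun i => h i a)) {a : ℝ} (ha : a ∈ J) :
    HasDerivAt (fun a => ∫ y in oddUnion (fun i => h i a), φ y)
      (∑ i : Fin n, (-1 : ℝ) ^ (i : ℕ) * (φ (h i a) * deriv (h i) a)) a := by
  have hev : (fun a => ∫ y in oddUnion (fun i => h i a), φ y) =ᶠ[nhds a]
      fun a => (∫ y, φ y) - ∑ i : Fin n, (-1 : ℝ) ^ (i : ℕ) * ∫ y in Ici (h i a), φ y := by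
    filter_upwards [hJ.mem_nhds ha] with b hb
    exact setIntegral_oddUnion _ (horder b hb) φ hφ
  refine HasDerivAt.congr_of_eventuallyEq ?_ hev
  have hsum := HasDerivAt.fun_sum (u := Finset.univ) fun (i : Fin n) _ =>
    (((hasDerivAt_integral_Ici φ hφ hc (h i a)).comp a
      (hdiff i a ha).hasDerivAt).const_mul ((-1 : ℝ) ^ (i : ℕ)))
  refine (hsum.const_sub (∫ y, φ y)).congr_deriv ?_
  rw [← Finset.sum_neg_distrib]
  exact Finset.sum_congr rfl fun i _ => by ring

/-- along a differentiable family of level-set thresholds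
`h i a` satisfying `a·p0·φ0(h i a) = (1-a)·p1·φ1(h i a)`, the functions
`f(a) = ∫_{H(h(a))} φ0` and `g(a) = ∫_{ℝ∖H(h(a))} φ1` are differentiable on the
open interval `J ⊆ (0,1)` and satisfy `a·p0·f'(a) + (1-a)·p1·g'(a) = 0`. -/
theorem stmt_6
    (p0 p1 : ℝ) (hp0 : p0 ∈ Set.Ioo (0:ℝ) 1) (hp1 : p1 ∈ Set.Ioo (0:ℝ) 1)
    (hp : p0 + p1 = 1)
    (φ0 φ1 : ℝ → ℝ) (hφ0 : ∀ y, 0 ≤ φ0 y) (hφ1 : ∀ y, 0 ≤ φ1 y)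
    (hi0 : Integrable φ0) (hi1 : Integrable φ1)
    (hI0 : ∫ y, φ0 y = 1) (hI1 : ∫ y, φ1 y = 1)
    (hc0 : Continuous φ0) (hc1 : Continuous φ1)
    (c d : ℝ) (J : Set ℝ) (hJ : J = Set.Ioo c d) (hJsub : J ⊆ Set.Ioo 0 1)
    (n : ℕ) (h : Fin n → ℝ → ℝ)
    (hdiff : ∀ i, ∀ a ∈ J, DifferentiableAt ℝ (h i) a)
    (horder : ∀ a ∈ J, StrictMono (fun i => h i a))
    (hlevel : ∀ a ∈ J, ∀ i, a * p0 * φ0 (h i a) = (1 - a) * p1 * φ1 (h i a)) :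
    DifferentiableOn ℝ (fun a => ∫ y in oddUnion (fun i => h i a), φ0 y) J ∧
    DifferentiableOn ℝ (fun a => ∫ y in (oddUnion (fun i => h i a))ᶜ, φ1 y) J ∧
    ∀ a ∈ J,
      a * p0 * deriv (fun a => ∫ y in oddUnion (fun i => h i a), φ0 y) a +
        (1 - a) * p1 * deriv (fun a => ∫ y in (oddUnion (fun i => h i a))ᶜ, φ1 y) a = 0 := by
  have hJo : IsOpen J := hJ ▸ isOpen_Ioo
  have hf := fun a (ha : a ∈ J) =>
    hasDerivAt_setIntegral_oddUnion φ0 hi0 hc0 hJo h hdiff horder ha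
  have hcompl : (fun a => ∫ y in (oddUnion (fun i => h i a))ᶜ, φ1 y)
      = fun a => (∫ y, φ1 y) - ∫ y in oddUnion (fun i => h i a), φ1 y := by
    funext a
    exact setIntegral_compl (measurableSet_oddUnion _) hi1
  have hg := fun a (ha : a ∈ J) =>
    (hasDerivAt_setIntegral_oddUnion φ1 hi1 hc1 hJo h hdiff horder ha).const_sub (∫ y, φ1 y)
  rw [hcompl]
  refine ⟨fun a ha => (hf a ha).differentiableAt.differentiableWithinAt,
    fun a ha => (hg a ha).differentiableAt.differentiableWithinAt, fun a ha => ?_⟩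
  rw [(hf a ha).deriv, (hg a ha).deriv, mul_neg, ← sub_eq_add_neg, sub_eq_zero,
    Finset.mul_sum, Finset.mul_sum]
  refine Finset.sum_congr rfl fun i _ => ?_
  linear_combination (-1 : ℝ) ^ (i : ℕ) * deriv (h i) a * hlevel a ha i
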